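/- arXiv:2503.04699 — 2 statements merged into one kernel-verified Lean document; each statement's English description precedes it below -/
import Mathlib

section
/- Let α, β, a, b be integers with α ≥ 1, β ≥ 1, a ≥ 0, b ≥ 0 and a·b < α·β. Then the topological index of the BB(ᾱ, β̄, a, b) code, with f = 1 + x + x^{-α} y^{b} and g = 1 + y + y^{-β} x^{a} in R, is Q = dim_{F₂} R ⧸ (f, g) = (α + 1)·(β + 1) − a·b. -/
noncomputable section

/-- The Laurent polynomial ring `F₂[x^±, y^±]` as a group algebra. -/
abbrev LaurentR : Type := AddMonoidAlgebra (ZMod 2) (ℤ × ℤ)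

/-- The monomial `x^i y^j`. -/
def mono (i j : ℤ) : LaurentR := AddMonoidAlgebra.single (i, j) 1

/-- The BB polynomial `f = 1 + x + x^{-α} y^{b}`. -/
def fBB (α b : ℤ) : LaurentR := 1 + mono 1 0 + mono (-α) b

/-- The BB polynomial `g = 1 + y + y^{-β} x^{a}`. -/
def gBB (β a : ℤ) : LaurentR := 1 + mono 0 1 + mono a (-β)

/-!
The polynomials `F = x ^ α * f` and `G = y ^ β * g` lie in `k[x, y]`. Give `x` weight `b + β` and
`y` weight `a + α`. Because `a * b < α * β`, the terms of highest weight are `x ^ (α + 1)` in `F`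
and `y ^ (β + 1)` in `G`, so `k[x, y] ⧸ (F, G)` has dimension `(α + 1) * (β + 1)`. Passing to
Laurent polynomials localizes at `x * y` and thus removes the part of this quotient on which
`x * y` is nilpotent. There `x` and `y` are both nilpotent, as `F ≡ y ^ b` modulo `x` and
`G ≡ x ^ a` modulo `y`; so this part is the quotient of `k[x, y]` by `F`, `G` and all monomials of
large weight. Its dimension is `a * b`, because the terms of lowest weight are `y ^ b` in `F` and
`x ^ a` in `G`.

Both dimensions are read off from leading monomials. To treat them together, exponents carry a
weight in `ℕ` that is to be decreased, weight `0` marking the monomials that are killed: the weight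
`w + 1` gives the first dimension and the truncated difference `N - w` the second.
-/

section

open Module AddMonoidAlgebra Filter
open scoped AddMonoidAlgebra

/-! ### Unitriangular families -/

theorem bijective_of_sub_mem_filtration {R V : Type*} [Ring R] [AddCommGroup V] [Module R V]
    (φ : End R V) (W : ℕ → Submodule R V) (hbot : W 0 = ⊥) (hunion : ∀ v, ∃ n, v ∈ W n)
    (hφ : ∀ n, ∀ v ∈ W (n + 1), φ v - v ∈ W n) : Function.Bijective φ := by
  constructor
  · rw [injective_iff_map_eq_zero]
    intro v hv
    obtain ⟨n, hn⟩ := hunion v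
    induction n with
    | zero => simpa [hbot] using hn
    | succ n ih => exact ih (by simpa [hv] using hφ n v hn)
  · rw [← LinearMap.range_eq_top, eq_top_iff]
    suffices ∀ n, W n ≤ LinearMap.range φ from fun v _ => (hunion v).elim fun n hn => this n hn
    intro n
    induction n with
    | zero => simp [hbot]
    | succ n ih =>
      intro v hv
      rw [← sub_sub_cancel (φ v) v]
      exact sub_mem (LinearMap.mem_range_self φ v) (ih (hφ n v hv))

theorem exists_basis_eq_of_unitriangular {ι R V : Type*} [Ring R] [AddCommGroup V] [Module R V]
    (b : Basis ι R V) (w : ι → ℕ) (e : ι → V)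
    (he : ∀ i, e i - b i ∈ Submodule.span R (b '' {j | w j < w i})) :
    ∃ b' : Basis ι R V, ⇑b' = e := by
  let φ : End R V := b.constr ℕ e
  let W : ℕ → Submodule R V := fun n => Submodule.span R (b '' {j | w j < n})
  have hunion : ∀ v, ∃ n, v ∈ W n := fun v =>
    ⟨(b.repr v).support.sup w + 1,
      b.mem_span_image.2 fun _ hi => Nat.lt_succ_of_le (Finset.le_sup hi)⟩
  have hφ : ∀ n, ∀ v ∈ W (n + 1), φ v - v ∈ W n := by
    intro n
    suffices W (n + 1) ≤ (W n).comap (φ - LinearMap.id) from this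
    refine Submodule.span_le.2 ?_
    rintro _ ⟨i, hi, rfl⟩
    have hmono : {j | w j < w i} ⊆ {j | w j < n} := fun j hj =>
      lt_of_lt_of_le hj (Nat.le_of_lt_succ hi)
    simpa [φ] using Submodule.span_mono (Set.image_mono hmono) (he i)
  have hbij := bijective_of_sub_mem_filtration φ W (by simp [W]) hunion hφ
  exact ⟨b.map (LinearEquiv.ofBijective φ hbij), by ext i; simp [φ]⟩

/-- The basis of `V ⧸ span (b '' sᶜ)` given by the classes of the vectors `b i` with `i ∈ s`. -/
def quotientBasis {ι R V : Type*} [Ring R] [Nontrivial R] [AddCommGroup V] [Module R V]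
    (b : Basis ι R V) (s : Set ι) : Basis s R (V ⧸ Submodule.span R (b '' sᶜ)) :=
  (Basis.span (b.linearIndependent.comp ((↑) : s → ι) Subtype.val_injective)).map <|
    (LinearEquiv.ofEq _ _ (by rw [Set.range_comp, Subtype.range_coe])).trans
      (Submodule.quotientEquivOfIsCompl _ _
        (b.linearIndependent.isCompl_span_image b.span_eq isCompl_compl.symm)).symm

/-! ### Localization of finite-dimensional algebras

On a finite-dimensional algebra the kernels of the powers of multiplication by `t` stabilize at the
kernel of localization away from `t`, so localizing loses as much dimension as `A ⧸ (t ^ n)` has. -/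

theorem eventually_finrank_away_add_finrank_quotient_span_pow {k A B : Type*} [Field k]
    [CommRing A] [Algebra k A] [Module.Finite k A] [CommRing B] [Algebra k B] [Algebra A B]
    [IsScalarTower k A B] (t : A) [IsLocalization.Away t B] :
    ∀ᶠ n in atTop, finrank k B + finrank k (A ⧸ Ideal.span {t ^ n}) = finrank k A := by
  have : IsArtinianRing A := IsArtinianRing.of_finite k A
  let T : End k A := LinearMap.mulLeft k t
  let φ : A →ₗ[k] B := (IsScalarTower.toAlgHom k A B).toLinearMap
  have hpow : ∀ n, T ^ n = LinearMap.mulLeft k (t ^ n) := LinearMap.pow_mulLeft k A t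
  have hrange : ∀ n, LinearMap.range (T ^ n) = (Ideal.span {t ^ n}).restrictScalars k := by
    intro n
    ext s
    simp [hpow, Ideal.mem_span_singleton, eq_comm, Dvd.dvd]
  have hker : LinearMap.ker φ = ⨆ n, LinearMap.ker (T ^ n) := by
    ext s
    rw [Submodule.mem_iSup_of_directed (fun n => LinearMap.ker (T ^ n))
      T.iterateKer.monotone.directed_le]
    simp [φ, hpow, IsLocalization.map_eq_zero_iff (Submonoid.powers t) B, Submonoid.mem_powers_iff]
  have hsurj : Function.Surjective φ :=
    IsArtinianRing.localization_surjective (Submonoid.powers t) B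
  filter_upwards [T.eventually_iSup_ker_pow_eq] with n hn
  have hφ := φ.finrank_range_add_finrank_ker
  rw [LinearMap.range_eq_top.2 hsurj, finrank_top, hker, hn] at hφ
  have hT := (T ^ n).finrank_range_add_finrank_ker
  have hquot := ((Ideal.span {t ^ n}).restrictScalars k).finrank_quotient_add_finrank
  rw [← hrange] at hquot
  have hscalars := (Submodule.Quotient.restrictScalarsEquiv k (Ideal.span {t ^ n})).finrank_eq
  rw [← hrange] at hscalars
  omega

theorem eventually_finrank_quotient_map_add_finrank_quotient_sup {k A B : Type*} [Field k]
    [CommRing A] [Algebra k A] [CommRing B] [Algebra k B] [Algebra A B]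
    [IsScalarTower k A B] (t : A) [IsLocalization.Away t B] (I : Ideal A)
    [Module.Finite k (A ⧸ I)] :
    ∀ᶠ n in atTop, finrank k (B ⧸ I.map (algebraMap A B)) +
      finrank k (A ⧸ I ⊔ Ideal.span {t ^ n}) = finrank k (A ⧸ I) := by
  have : IsLocalization.Away (Ideal.Quotient.mk I t) (B ⧸ I.map (algebraMap A B)) := by
    have hloc : IsLocalization (Algebra.algebraMapSubmonoid (A ⧸ I) (Submonoid.powers t))
        (B ⧸ I.map (algebraMap A B)) := inferInstance
    rwa [Algebra.algebraMapSubmonoid_powers] at hloc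
  have : IsScalarTower k (A ⧸ I) (B ⧸ I.map (algebraMap A B)) :=
    .of_algebraMap_eq fun c =>
      congr_arg (Ideal.Quotient.mk _) (IsScalarTower.algebraMap_apply k A B c)
  filter_upwards [eventually_finrank_away_add_finrank_quotient_span_pow (k := k)
    (B := B ⧸ I.map (algebraMap A B)) (Ideal.Quotient.mk I t)] with n hn
  rw [← hn, ← (DoubleQuot.quotQuotEquivQuotSupₐ k I (Ideal.span {t ^ n})).toLinearEquiv.finrank_eq,
    Ideal.map_span, Set.image_singleton, map_pow, Ideal.Quotient.mkₐ_eq_mk]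

/-! ### Leading exponents -/

section LeadingExponents

theorem single_mem_supported {k M : Type*} [Semiring k] {s : Set M} {m : M} (c : k) (hm : m ∈ s) :
    single m c ∈ supported k k s :=
  Finsupp.single_mem_supported k c hm

theorem erase_mem_supported {k M : Type*} [Semiring k] (F : k[M]) (p : M) :
    F.erase p ∈ supported k k {s | s ∈ F.coeff.support ∧ s ≠ p} := by
  classical
  intro s hs
  change s ∈ (F.coeff.erase p).support at hs
  rw [Finsupp.support_erase] at hs
  exact (Finset.mem_erase.1 hs).symm

variable {k M : Type*} [Field k] [AddCommMonoid M]

/-- The span of the monomials of `w`-weight less than `n`. -/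
abbrev weightLT (k : Type*) [Field k] (w : M → ℕ) (n : ℕ) : Submodule k k[M] :=
  supported k k {m | w m < n}

/-- `p` is the leading exponent of `F` for the weight `w`, also after translation by any exponent.
Exponents of weight `0` are regarded as discarded: among them nothing is compared, but a translate
whose leading exponent is discarded must be discarded altogether. -/
structure HasLeadingExponent (w : M → ℕ) (F : k[M]) (p : M) : Prop where
  coeff_ne_zero : F.coeff p ≠ 0
  weight_lt : ∀ s ∈ F.coeff.support, s ≠ p → ∀ m, w (m + s) < max 1 (w (m + p))

theorem mul_mem_of_mem_supported {L : Submodule k k[M]} {s : Set M} {x y : k[M]}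
    (hx : x ∈ supported k k s) (h : ∀ m ∈ s, single m 1 * y ∈ L) : x * y ∈ L := by
  rw [supported_eq_span_single] at hx
  suffices Submodule.span k ((single · 1) '' s) ≤ L.comap (LinearMap.mulRight k y) from this hx
  rw [Submodule.span_le]
  rintro _ ⟨m, hm, rfl⟩
  exact h m hm

theorem mul_mem_of_forall_single_mul_mem {L : Submodule k k[M]} {y : k[M]}
    (h : ∀ m, single m 1 * y ∈ L) (x : k[M]) : x * y ∈ L :=
  mul_mem_of_mem_supported (s := Set.univ) (Set.subset_univ _) fun m _ => h m

theorem span_restrictScalars_le_of_forall_single_mul_mem {L : Submodule k k[M]} {S : Set k[M]}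
    (h : ∀ y ∈ S, ∀ m, single m 1 * y ∈ L) : (Ideal.span S).restrictScalars k ≤ L := by
  suffices ∀ y ∈ Ideal.span S, ∀ x, x * y ∈ L from fun y hy => by simpa using this y hy 1
  intro y hy
  induction hy using Submodule.span_induction with
  | zero => simp
  | mem y hy => exact mul_mem_of_forall_single_mul_mem (h y hy)
  | add y z _ _ hy hz => exact fun x => by simpa [mul_add] using add_mem (hy x) (hz x)
  | smul r y _ hy => exact fun x => by simpa [mul_assoc] using hy (x * r)

theorem HasLeadingExponent.single_mul_sub_single_mem {w : M → ℕ} {F : k[M]} {p : M}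
    (hF : HasLeadingExponent w F p) (m : M) :
    single m (F.coeff p)⁻¹ * F - single (m + p) 1 ∈ weightLT k w (max 1 (w (m + p))) := by
  have hsplit : single m (F.coeff p)⁻¹ * F - single (m + p) 1 =
      F.erase p * single m (F.coeff p)⁻¹ := by
    nth_rw 2 [← single_add_erase p F]
    rw [mul_add, single_mul_single, inv_mul_cancel₀ hF.coeff_ne_zero, add_sub_cancel_left, mul_comm]
  rw [hsplit]
  refine mul_mem_of_mem_supported (erase_mem_supported F p) fun s hs => ?_
  rw [single_mul_single, add_comm s]
  exact single_mem_supported _ (hF.weight_lt s hs.1 hs.2 m)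

theorem HasLeadingExponent.single_mul_mem_of_weight_eq_zero {w : M → ℕ}
    {F : k[M]} {p : M} (hF : HasLeadingExponent w F p) {m : M} (hm : w (m + p) = 0) :
    single m (F.coeff p)⁻¹ * F ∈ weightLT k w 1 := by
  have h := hF.single_mul_sub_single_mem m
  rw [hm, max_eq_left zero_le_one] at h
  rw [← sub_add_cancel (single m (F.coeff p)⁻¹ * F) (single (m + p) 1)]
  exact add_mem h (single_mem_supported _ (by simp [hm]))

theorem single_mul_mem_of_ne_zero {L : Submodule k k[M]} {y : k[M]} {m : M} {c : k} (hc : c ≠ 0)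
    (d : k) (h : single m c * y ∈ L) : single m d * y ∈ L := by
  simpa [← smul_mul_assoc, hc] using L.smul_mem (d * c⁻¹) h

section ReductionFamily

variable [PartialOrder M] [Sub M]

open Classical in
/-- The monomials of `k[M]`, where those that are discarded or divisible by neither leading
monomial are kept and every other one is replaced by the monic multiple of `F` (preferably) or `G`
with the same leading exponent. -/
def reductionFamily (w : M → ℕ) (F G : k[M]) (p q m : M) : k[M] :=
  if w m = 0 then single m 1
  else if p ≤ m then single (m - p) (F.coeff p)⁻¹ * F
  else if q ≤ m then single (m - q) (G.coeff q)⁻¹ * G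
  else single m 1

variable {w : M → ℕ} {F G : k[M]} {p q : M} {L : Submodule k k[M]}

theorem reductionFamily_mem_span {m : M} (hm : w m = 0 ∨ p ≤ m ∨ q ≤ m) :
    reductionFamily w F G p q m ∈ Ideal.span ({F, G} ∪ (single · 1) '' {m | w m = 0}) := by
  unfold reductionFamily
  split_ifs with h0 hp hq
  · exact Ideal.subset_span (Or.inr ⟨m, h0, rfl⟩)
  · exact Ideal.mul_mem_left _ _ (Ideal.subset_span (by simp))
  · exact Ideal.mul_mem_left _ _ (Ideal.subset_span (by simp))
  · simp_all

theorem weightLT_one_le_of_reductionFamily_mem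
    (hL : ∀ m, w m = 0 ∨ p ≤ m ∨ q ≤ m → reductionFamily w F G p q m ∈ L) :
    weightLT k w 1 ≤ L := by
  rw [weightLT, supported_eq_span_single, Submodule.span_le]
  rintro _ ⟨m, hm, rfl⟩
  have h0 : w m = 0 := Nat.lt_one_iff.1 hm
  simpa [reductionFamily, h0] using hL m (Or.inl h0)

variable [CanonicallyOrderedAdd M] [OrderedSub M]

theorem reductionFamily_sub_single_mem (hF : HasLeadingExponent w F p)
    (hG : HasLeadingExponent w G q) (m : M) :
    reductionFamily w F G p q m - single m 1 ∈ weightLT k w (w m) := by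
  unfold reductionFamily
  split_ifs with h0 hp hq
  · simp
  · simpa [tsub_add_cancel_of_le hp, Nat.one_le_iff_ne_zero.2 h0]
      using hF.single_mul_sub_single_mem (m - p)
  · simpa [tsub_add_cancel_of_le hq, Nat.one_le_iff_ne_zero.2 h0]
      using hG.single_mul_sub_single_mem (m - q)
  · simp

variable [AddLeftReflectLE M]

theorem single_mul_left_mem_of_reductionFamily_mem (hF : HasLeadingExponent w F p)
    (hL : ∀ m, w m = 0 ∨ p ≤ m ∨ q ≤ m → reductionFamily w F G p q m ∈ L) (m : M) :
    single m 1 * F ∈ L := by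
  refine single_mul_mem_of_ne_zero (inv_ne_zero hF.coeff_ne_zero) 1 ?_
  by_cases h0 : w (m + p) = 0
  · exact weightLT_one_le_of_reductionFamily_mem hL (hF.single_mul_mem_of_weight_eq_zero h0)
  · simpa [reductionFamily, h0] using hL (m + p) (Or.inr (Or.inl le_add_self))

theorem single_mul_right_mem_of_not_le (hG : HasLeadingExponent w G q)
    (hL : ∀ m, w m = 0 ∨ p ≤ m ∨ q ≤ m → reductionFamily w F G p q m ∈ L) {m : M}
    (hm : ¬ p ≤ m + q) : single m 1 * G ∈ L := by
  refine single_mul_mem_of_ne_zero (inv_ne_zero hG.coeff_ne_zero) 1 ?_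
  by_cases h0 : w (m + q) = 0
  · exact weightLT_one_le_of_reductionFamily_mem hL (hG.single_mul_mem_of_weight_eq_zero h0)
  · simpa [reductionFamily, h0, hm] using hL (m + q) (Or.inr (Or.inr le_add_self))

theorem single_mul_right_mem_of_reductionFamily_mem (hF : HasLeadingExponent w F p)
    (hG : HasLeadingExponent w G q) (hw : ∀ m n, w m = 0 → w (m + n) = 0)
    (hpq : ∀ m, p ≤ m + q → p ≤ m)
    (hL : ∀ m, w m = 0 ∨ p ≤ m ∨ q ≤ m → reductionFamily w F G p q m ∈ L) (m : M) :
    single m 1 * G ∈ L := by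
  induction hn : w m using Nat.strong_induction_on generalizing m with | _ n ih
  subst hn
  by_cases h0 : w m = 0
  · rw [mul_comm]
    refine mul_mem_of_forall_single_mul_mem (fun n => ?_) G
    exact weightLT_one_le_of_reductionFamily_mem hL <| by
      rw [single_mul_single, add_comm]
      exact single_mem_supported _ (by simp [hw m n h0])
  by_cases hp : p ≤ m
  -- Buchberger's criterion for coprime leading monomials: replacing the monomial `m` by lower terms
  -- modulo `F` changes its product with `G` by a multiple of `F`.
  · have htail : single (m - p) (F.coeff p)⁻¹ * F - single m 1 ∈ weightLT k w (w m) := by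
      simpa [tsub_add_cancel_of_le hp, Nat.one_le_iff_ne_zero.2 h0]
        using hF.single_mul_sub_single_mem (m - p)
    have hF_mul := mul_mem_of_forall_single_mul_mem
      (single_mul_left_mem_of_reductionFamily_mem hF hL) (single (m - p) (F.coeff p)⁻¹ * G)
    have htail_mul := mul_mem_of_mem_supported htail fun n hn => ih (w n) hn n rfl
    convert sub_mem hF_mul htail_mul using 1
    ring
  · exact single_mul_right_mem_of_not_le hG hL fun h => hp (hpq m h)

theorem span_reductionFamily_eq (hF : HasLeadingExponent w F p) (hG : HasLeadingExponent w G q)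
    (hw : ∀ m n, w m = 0 → w (m + n) = 0) (hpq : ∀ m, p ≤ m + q → p ≤ m) :
    Submodule.span k (reductionFamily w F G p q '' {m | w m = 0 ∨ p ≤ m ∨ q ≤ m}) =
      (Ideal.span ({F, G} ∪ (single · 1) '' {m | w m = 0})).restrictScalars k := by
  set L := Submodule.span k (reductionFamily w F G p q '' {m | w m = 0 ∨ p ≤ m ∨ q ≤ m})
  have hL : ∀ m, w m = 0 ∨ p ≤ m ∨ q ≤ m → reductionFamily w F G p q m ∈ L :=
    fun m hm => Submodule.subset_span ⟨m, hm, rfl⟩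
  apply le_antisymm
  · rw [Submodule.span_le]
    rintro _ ⟨m, hm, rfl⟩
    exact reductionFamily_mem_span hm
  refine span_restrictScalars_le_of_forall_single_mul_mem ?_
  rintro _ ((rfl | rfl) | ⟨n, hn, rfl⟩) m
  · exact single_mul_left_mem_of_reductionFamily_mem hF hL m
  · exact single_mul_right_mem_of_reductionFamily_mem hF hG hw hpq hL m
  · refine weightLT_one_le_of_reductionFamily_mem hL ?_
    rw [single_mul_single, add_comm]
    exact single_mem_supported _ (by simp [hw n m hn])

theorem nonempty_basis_quotient_span_union (hF : HasLeadingExponent w F p)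
    (hG : HasLeadingExponent w G q) (hw : ∀ m n, w m = 0 → w (m + n) = 0)
    (hpq : ∀ m, p ≤ m + q → p ≤ m) :
    Nonempty (Basis {m | w m ≠ 0 ∧ ¬ p ≤ m ∧ ¬ q ≤ m} k
      (k[M] ⧸ Ideal.span ({F, G} ∪ (single · 1) '' {m | w m = 0}))) := by
  obtain ⟨e, he⟩ := exists_basis_eq_of_unitriangular (AddMonoidAlgebra.basis M k) w
    (reductionFamily w F G p q) fun m => by
      rw [show ⇑(AddMonoidAlgebra.basis M k) = (single · 1) from
        funext (AddMonoidAlgebra.basis_apply k)]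
      simpa [weightLT, supported_eq_span_single]
        using reductionFamily_sub_single_mem hF hG m
  have hcompl : {m | w m ≠ 0 ∧ ¬ p ≤ m ∧ ¬ q ≤ m}ᶜ = {m | w m = 0 ∨ p ≤ m ∨ q ≤ m} := by
    ext m
    simp only [Set.mem_compl_iff, Set.mem_ofPred_eq]
    tauto
  have hspan := span_reductionFamily_eq hF hG hw hpq
  rw [← hcompl, ← he] at hspan
  exact ⟨(quotientBasis e _).map <| (Submodule.quotEquivOfEq _ _ hspan).trans
    (Submodule.Quotient.restrictScalarsEquiv k _)⟩

end ReductionFamily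

end LeadingExponents

/-! ### Highest and lowest weights -/

section ExtremalExponents

variable {k M : Type*} [Field k] [AddCommMonoid M]

/-- `p` is the unique exponent of `F` of largest `w`-weight. -/
structure IsTopExponent (w : M → ℕ) (F : k[M]) (p : M) : Prop where
  coeff_ne_zero : F.coeff p ≠ 0
  weight_lt : ∀ s ∈ F.coeff.support, s ≠ p → w s < w p

/-- `p` is the unique exponent of `F` of smallest `w`-weight. -/
structure IsBottomExponent (w : M → ℕ) (F : k[M]) (p : M) : Prop where
  coeff_ne_zero : F.coeff p ≠ 0
  lt_weight : ∀ s ∈ F.coeff.support, s ≠ p → w p < w s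

variable {w : M →+ ℕ} {F G : k[M]} {p : M}

theorem IsTopExponent.hasLeadingExponent (hF : IsTopExponent w F p) :
    HasLeadingExponent (fun m => w m + 1) F p where
  coeff_ne_zero := hF.coeff_ne_zero
  weight_lt s hs hsp m := by
    have := hF.weight_lt s hs hsp
    simp only [map_add]
    omega

theorem IsBottomExponent.hasLeadingExponent (hF : IsBottomExponent w F p) (N : ℕ) :
    HasLeadingExponent (fun m => N - w m) F p where
  coeff_ne_zero := hF.coeff_ne_zero
  weight_lt s hs hsp m := by
    have := hF.lt_weight s hs hsp
    simp only [map_add]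
    omega

/-- The ideal generated by `F`, `G` and all monomials of `w`-weight at least `N`. -/
def truncatedIdeal (w : M → ℕ) (F G : k[M]) (N : ℕ) : Ideal k[M] :=
  Ideal.span ({F, G} ∪ (single · 1) '' {m | N ≤ w m})

end ExtremalExponents

section CanonicallyOrdered

variable {k M : Type*} [Field k] [AddCommMonoid M] [PartialOrder M] [CanonicallyOrderedAdd M]

theorem weight_le_weight (w : M →+ ℕ) {m n : M} (h : m ≤ n) : w m ≤ w n := by
  obtain ⟨u, rfl⟩ := le_iff_exists_add.1 h
  simp

theorem single_mem_of_le {I : Ideal k[M]} {m n : M} (hm : single m 1 ∈ I) (h : m ≤ n) :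
    single n 1 ∈ I := by
  obtain ⟨u, rfl⟩ := le_iff_exists_add'.1 h
  simpa [single_mul_single] using I.mul_mem_left (single u 1) hm

theorem single_mem_sup_span_single {I : Ideal k[M]} {F : k[M]} (hF : F ∈ I) {p v : M}
    (hp : F.coeff p ≠ 0) (hv : ∀ s ∈ F.coeff.support, s ≠ p → v ≤ s) :
    single p 1 ∈ I ⊔ Ideal.span {single v 1} := by
  have htail : F.erase p * 1 ∈ (Ideal.span {single v (1 : k)}).restrictScalars k :=
    mul_mem_of_mem_supported (erase_mem_supported F p) fun s hs => by
      rw [mul_one]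
      exact single_mem_of_le (Ideal.mem_span_singleton_self _) (hv s hs.1 hs.2)
  have hlead : single p (F.coeff p) * 1 ∈ (I ⊔ Ideal.span {single v 1}).restrictScalars k := by
    rw [mul_one, ← add_sub_cancel_right (single p _) (F.erase p), single_add_erase]
    exact sub_mem (Ideal.mem_sup_left hF) (Ideal.mem_sup_right (by simpa using htail))
  simpa only [mul_one, Submodule.restrictScalars_mem]
    using single_mul_mem_of_ne_zero hp 1 hlead

end CanonicallyOrdered

section Quotients

variable {A : Type*} [CommRing A] {I : Ideal A} {r s : A}

theorem mem_sup_span_singleton_iff : r ∈ I ⊔ Ideal.span {s} ↔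
    Ideal.Quotient.mk I s ∣ Ideal.Quotient.mk I r := by
  rw [sup_comm, ← Ideal.mem_quotient_iff_mem_sup, Ideal.map_span, Set.image_singleton,
    Ideal.mem_span_singleton]

theorem pow_mem_sup_span_singleton_mul_pow {a : ℕ} (h : r ^ a ∈ I ⊔ Ideal.span {s}) (n : ℕ) :
    r ^ ((a + 1) * n) ∈ I ⊔ Ideal.span {(r * s) ^ n} := by
  rw [mem_sup_span_singleton_iff] at h ⊢
  simp only [map_pow, map_mul, pow_mul] at h ⊢
  exact pow_dvd_pow_of_dvd (by rw [pow_succ']; exact mul_dvd_mul_left _ h) n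

theorem finrank_quotient_eq_of_le_of_le {k : Type*} [Field k] [Algebra k A] {J K : Ideal A}
    (hIJ : I ≤ J) (hJK : J ≤ K) [Module.Finite k (A ⧸ I)]
    (h : finrank k (A ⧸ I) = finrank k (A ⧸ K)) : finrank k (A ⧸ J) = finrank k (A ⧸ K) := by
  have hsurj₁ : Function.Surjective (Ideal.Quotient.factorₐ k hIJ).toLinearMap :=
    Ideal.Quotient.factor_surjective hIJ
  have hsurj₂ : Function.Surjective (Ideal.Quotient.factorₐ k hJK).toLinearMap :=
    Ideal.Quotient.factor_surjective hJK
  have := Module.Finite.of_surjective _ hsurj₁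
  exact ((LinearMap.finrank_le_finrank_of_surjective hsurj₁).trans h.le).antisymm
    (LinearMap.finrank_le_finrank_of_surjective hsurj₂)

end Quotients

section TwoVariables

variable {k : Type*} [Field k] {F G : k[ℕ × ℕ]} {p q : ℕ}

theorem finite_and_finrank_quotient_span_union {w : ℕ × ℕ → ℕ}
    (hF : HasLeadingExponent w F (p, 0)) (hG : HasLeadingExponent w G (0, q))
    (hw : ∀ m n, w m = 0 → w (m + n) = 0) (hbox : ∀ i < p, ∀ j < q, w (i, j) ≠ 0) :
    Module.Finite k (k[ℕ × ℕ] ⧸ Ideal.span ({F, G} ∪ (single · 1) '' {m | w m = 0})) ∧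
      finrank k (k[ℕ × ℕ] ⧸ Ideal.span ({F, G} ∪ (single · 1) '' {m | w m = 0})) = p * q := by
  obtain ⟨e⟩ := nonempty_basis_quotient_span_union hF hG hw (by simp [Prod.le_def])
  have hset : {m | w m ≠ 0 ∧ ¬ (p, 0) ≤ m ∧ ¬ (0, q) ≤ m} =
      ((Finset.range p ×ˢ Finset.range q : Finset (ℕ × ℕ)) : Set (ℕ × ℕ)) := by
    ext ⟨i, j⟩
    have := hbox i
    simp only [Prod.le_def, Set.mem_ofPred_eq, Finset.coe_product, Finset.coe_range, Set.mem_prod,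
      Set.mem_Iio]
    grind
  rw [hset] at e
  exact ⟨.of_basis e, by simp [finrank_eq_card_basis e]⟩

variable {w : ℕ × ℕ →+ ℕ}

theorem finite_and_finrank_quotient_of_isTopExponent (hF : IsTopExponent w F (p, 0))
    (hG : IsTopExponent w G (0, q)) :
    Module.Finite k (k[ℕ × ℕ] ⧸ Ideal.span {F, G}) ∧
      finrank k (k[ℕ × ℕ] ⧸ Ideal.span {F, G}) = p * q := by
  have hdim := finite_and_finrank_quotient_span_union hF.hasLeadingExponent hG.hasLeadingExponent
    (by simp) (by simp)
  have hset : {m | w m + 1 = 0} = ∅ := by simp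
  rwa [hset, Set.image_empty, Set.union_empty] at hdim

theorem finite_and_finrank_quotient_truncatedIdeal (hF : IsBottomExponent w F (p, 0))
    (hG : IsBottomExponent w G (0, q)) {N : ℕ} (hN : w (p, q) < N) :
    Module.Finite k (k[ℕ × ℕ] ⧸ truncatedIdeal w F G N) ∧
      finrank k (k[ℕ × ℕ] ⧸ truncatedIdeal w F G N) = p * q := by
  have hbox : ∀ i < p, ∀ j < q, N - w (i, j) ≠ 0 := by
    intro i hi j hj
    have := weight_le_weight w (Prod.mk_le_mk.2 ⟨hi.le, hj.le⟩)
    omega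
  have hdim := finite_and_finrank_quotient_span_union (hF.hasLeadingExponent N)
    (hG.hasLeadingExponent N) (fun m n h => by simp only [map_add]; omega) hbox
  have hset : {m | N - w m = 0} = {m | N ≤ w m} := by simp only [tsub_eq_zero_iff_le]
  rwa [hset] at hdim

theorem eventually_truncatedIdeal_le_sup {a b : ℕ} (w : ℕ × ℕ →+ ℕ) (hF : F.coeff (0, b) ≠ 0)
    (hFx : ∀ s ∈ F.coeff.support, s ≠ (0, b) → (1, 0) ≤ s) (hG : G.coeff (a, 0) ≠ 0)
    (hGy : ∀ s ∈ G.coeff.support, s ≠ (a, 0) → (0, 1) ≤ s) (n : ℕ) :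
    ∀ᶠ N in atTop,
      truncatedIdeal w G F N ≤ Ideal.span {F, G} ⊔ Ideal.span {single (1, 1) 1 ^ n} := by
  set I := Ideal.span {F, G}
  have hFI : F ∈ I := Ideal.subset_span (by simp)
  have hGI : G ∈ I := Ideal.subset_span (by simp)
  have hx : single ((a + 1) * n, 0) 1 ∈ I ⊔ Ideal.span {single (1, 1) 1 ^ n} := by
    have h := pow_mem_sup_span_singleton_mul_pow (I := I) (r := single (1, 0) (1 : k)) (a := a)
      (by simpa [single_pow] using single_mem_sup_span_single hGI hG hGy) n
    simpa [single_pow, single_mul_single] using h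
  have hy : single (0, (b + 1) * n) 1 ∈ I ⊔ Ideal.span {single (1, 1) 1 ^ n} := by
    have h := pow_mem_sup_span_singleton_mul_pow (I := I) (r := single (0, 1) (1 : k)) (a := b)
      (by simpa [single_pow] using single_mem_sup_span_single hFI hF hFx) n
    simpa [single_pow, single_mul_single] using h
  filter_upwards [eventually_gt_atTop (w ((a + 1) * n, (b + 1) * n))] with N hN
  rw [truncatedIdeal, Ideal.span_le]
  rintro _ ((rfl | rfl) | ⟨m, hm : N ≤ w m, rfl⟩)
  · exact Ideal.mem_sup_left hGI
  · exact Ideal.mem_sup_left hFI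
  · have hnot : ¬ m ≤ ((a + 1) * n, (b + 1) * n) := fun h =>
      (weight_le_weight w h).not_gt (hN.trans_le hm)
    rcases le_total ((a + 1) * n) m.1 with h | h
    · exact single_mem_of_le hx (Prod.le_def.2 ⟨h, zero_le⟩)
    · exact single_mem_of_le hy
        (Prod.le_def.2 ⟨zero_le, (not_le.1 fun h' => hnot ⟨h, h'⟩).le⟩)

theorem sup_span_le_truncatedIdeal {w : ℕ × ℕ →+ ℕ} (hw : w (1, 1) ≠ 0) {n N : ℕ} (hN : N ≤ n) :
    Ideal.span {F, G} ⊔ Ideal.span {single (1, 1) 1 ^ n} ≤ truncatedIdeal w G F N := by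
  rw [← Ideal.span_union, Ideal.span_le]
  rintro _ ((rfl | rfl) | rfl)
  · exact Ideal.subset_span (by simp)
  · exact Ideal.subset_span (by simp)
  · refine Ideal.subset_span (Or.inr ⟨n • (1, 1), ?_, by simp [single_pow]⟩)
    rw [Set.mem_ofPred_eq, map_nsmul, smul_eq_mul]
    exact hN.trans (Nat.le_mul_of_pos_right n (Nat.pos_of_ne_zero hw))

theorem eventually_finrank_quotient_sup {a b : ℕ} (hw : w (1, 1) ≠ 0)
    (hF : IsBottomExponent w F (0, b)) (hG : IsBottomExponent w G (a, 0))
    (hFx : ∀ s ∈ F.coeff.support, s ≠ (0, b) → (1, 0) ≤ s)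
    (hGy : ∀ s ∈ G.coeff.support, s ≠ (a, 0) → (0, 1) ≤ s) :
    ∀ᶠ n in atTop, finrank k
      (k[ℕ × ℕ] ⧸ Ideal.span {F, G} ⊔ Ideal.span {single (1, 1) 1 ^ n}) = a * b := by
  filter_upwards [eventually_gt_atTop (w (a, b))] with n hn
  obtain ⟨N, hle, hN⟩ := ((eventually_truncatedIdeal_le_sup w hF.coeff_ne_zero hFx
    hG.coeff_ne_zero hGy n).and (eventually_gt_atTop (w (a, b)))).exists
  have ⟨_, hdimN⟩ := finite_and_finrank_quotient_truncatedIdeal hG hF hN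
  have ⟨_, hdimn⟩ := finite_and_finrank_quotient_truncatedIdeal hG hF hn
  rw [← hdimn]
  exact finrank_quotient_eq_of_le_of_le hle (sup_span_le_truncatedIdeal hw le_rfl)
    (hdimN.trans hdimn.symm)

theorem finrank_quotient_map_add_mul {B : Type*} [CommRing B] [Algebra k B] [Algebra k[ℕ × ℕ] B]
    [IsScalarTower k k[ℕ × ℕ] B] [IsLocalization.Away (single (1, 1) 1 : k[ℕ × ℕ]) B]
    {a b : ℕ} (hw : w (1, 1) ≠ 0)
    (hFtop : IsTopExponent w F (p, 0)) (hGtop : IsTopExponent w G (0, q))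
    (hF : IsBottomExponent w F (0, b)) (hG : IsBottomExponent w G (a, 0))
    (hFx : ∀ s ∈ F.coeff.support, s ≠ (0, b) → (1, 0) ≤ s)
    (hGy : ∀ s ∈ G.coeff.support, s ≠ (a, 0) → (0, 1) ≤ s) :
    finrank k (B ⧸ (Ideal.span {F, G}).map (algebraMap k[ℕ × ℕ] B)) + a * b = p * q := by
  have ⟨_, hdim⟩ := finite_and_finrank_quotient_of_isTopExponent hFtop hGtop
  obtain ⟨n, hloc, hn⟩ := ((eventually_finrank_quotient_map_add_finrank_quotient_sup (k := k)
    (B := B) (single (1, 1) 1) (Ideal.span {F, G})).and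
    (eventually_finrank_quotient_sup hw hF hG hFx hGy)).exists
  rw [← hdim, ← hloc, hn]

end TwoVariables

/-! ### Laurent polynomials in two variables -/

section Laurent

variable (k : Type*) [Field k]

/-- The inclusion `k[x, y] → k[x^±, y^±]`. -/
def polyToLaurent : k[ℕ × ℕ] →ₐ[k] k[ℤ × ℤ] :=
  mapDomainAlgHom k k ((Nat.castAddMonoidHom ℤ).prodMap (Nat.castAddMonoidHom ℤ))

instance algebraPolyLaurent : Algebra k[ℕ × ℕ] k[ℤ × ℤ] := (polyToLaurent k).toRingHom.toAlgebra

variable {k}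

theorem algebraMap_single (i j : ℕ) (c : k) :
    algebraMap k[ℕ × ℕ] k[ℤ × ℤ] (single (i, j) c) = single ((i : ℤ), (j : ℤ)) c := by
  simp [RingHom.algebraMap_toAlgebra, polyToLaurent]

theorem algebraMap_polyLaurent_injective :
    Function.Injective (algebraMap k[ℕ × ℕ] k[ℤ × ℤ]) :=
  mapDomain_injective (Nat.cast_injective.prodMap Nat.cast_injective)

instance isScalarTower_polyLaurent : IsScalarTower k k[ℕ × ℕ] k[ℤ × ℤ] :=
  .of_algebraMap_eq fun c => ((polyToLaurent k).commutes c).symm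

theorem isUnit_single {M : Type*} [AddCommGroup M] (m : M) {c : k} (hc : c ≠ 0) :
    IsUnit (single m c) :=
  .of_mul_eq_one (single (-m) c⁻¹) (by simp [single_mul_single, hc, one_def])

theorem exists_mul_pow_eq_algebraMap (r : k[ℤ × ℤ]) :
    ∃ (n : ℕ) (s : k[ℕ × ℕ]), r * single (1, 1) 1 ^ n = algebraMap k[ℕ × ℕ] k[ℤ × ℤ] s := by
  induction r using AddMonoidAlgebra.induction_linear with
  | zero => exact ⟨0, 0, by simp⟩
  | add f g hf hg =>
    obtain ⟨m, s, hs⟩ := hf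
    obtain ⟨n, t, ht⟩ := hg
    refine ⟨m + n, s * single (1, 1) 1 ^ n + t * single (1, 1) 1 ^ m, ?_⟩
    simp only [map_add, map_mul, map_pow, ← hs, ← ht, algebraMap_single, Nat.cast_one]
    ring
  | single z c =>
    obtain ⟨i, j⟩ := z
    refine ⟨i.natAbs + j.natAbs,
      single ((i + i.natAbs + j.natAbs).toNat, (j + i.natAbs + j.natAbs).toNat) c, ?_⟩
    rw [single_pow, algebraMap_single, single_mul_single, one_pow, mul_one]
    congr 1
    ext <;> simp only [Prod.smul_mk, nsmul_one, Prod.mk_add_mk] <;> omega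

instance isLocalization_away_polyLaurent :
    IsLocalization.Away (single (1, 1) 1 : k[ℕ × ℕ]) k[ℤ × ℤ] where
  map_units := by
    rintro ⟨_, n, rfl⟩
    simpa [algebraMap_single] using (isUnit_single ((1, 1) : ℤ × ℤ) (one_ne_zero (α := k))).pow n
  surj r := by
    obtain ⟨n, s, h⟩ := exists_mul_pow_eq_algebraMap r
    exact ⟨(s, ⟨_, n, rfl⟩), by simpa [algebraMap_single] using h⟩
  exists_of_eq h := ⟨1, by rw [algebraMap_polyLaurent_injective h]⟩

end Laurent

section Trinomials

variable {k : Type*} [Field k]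

section Exponents

variable {M : Type*} [AddCommMonoid M] {w : M → ℕ} {l m n s : M} {c d e : k}

theorem mem_support_trinomial (hs : s ∈ (single l c + single m d + single n e).coeff.support) :
    s = l ∨ s = m ∨ s = n := by
  by_contra! h
  simp [coeff_single, h.1.symm, h.2.1.symm, h.2.2.symm] at hs

theorem isTopExponent_trinomial (hc : c ≠ 0) (hm : w m < w l) (hn : w n < w l) :
    IsTopExponent w (single l c + single m d + single n e) l where
  coeff_ne_zero := by
    have hml : m ≠ l := fun h => hm.ne (h ▸ rfl)
    have hnl : n ≠ l := fun h => hn.ne (h ▸ rfl)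
    simpa [coeff_single, hml, hnl] using hc
  weight_lt s hs hsl := by
    rcases mem_support_trinomial hs with rfl | rfl | rfl
    exacts [absurd rfl hsl, hm, hn]

theorem isBottomExponent_trinomial (he : e ≠ 0) (hl : w n < w l) (hm : w n < w m) :
    IsBottomExponent w (single l c + single m d + single n e) n where
  coeff_ne_zero := by
    have hln : l ≠ n := fun h => hl.ne' (h ▸ rfl)
    have hmn : m ≠ n := fun h => hm.ne' (h ▸ rfl)
    simpa [coeff_single, hln, hmn] using he
  lt_weight s hs hsn := by
    rcases mem_support_trinomial hs with rfl | rfl | rfl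
    exacts [hl, hm, absurd rfl hsn]

end Exponents

/-- The weight on exponents giving `x` weight `u` and `y` weight `v`. -/
def linearWeight (u v : ℕ) : ℕ × ℕ →+ ℕ :=
  (AddMonoidHom.mulLeft u).coprod (AddMonoidHom.mulLeft v)

@[simp]
theorem linearWeight_apply (u v i j : ℕ) : linearWeight u v (i, j) = u * i + v * j := rfl

/-- The polynomial `c₁ x^(α+1) + c₀ x^α + c₂ y^b`. -/
def trinomialX (c₀ c₁ c₂ : k) (α b : ℕ) : k[ℕ × ℕ] :=
  single (α + 1, 0) c₁ + single (α, 0) c₀ + single (0, b) c₂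

/-- The polynomial `d₁ y^(β+1) + d₀ y^β + d₂ x^a`. -/
def trinomialY (d₀ d₁ d₂ : k) (β a : ℕ) : k[ℕ × ℕ] :=
  single (0, β + 1) d₁ + single (0, β) d₀ + single (a, 0) d₂

variable {c₀ c₁ c₂ d₀ d₁ d₂ : k} {α β a b : ℕ}

theorem finrank_quotient_map_trinomials (hc₁ : c₁ ≠ 0) (hc₂ : c₂ ≠ 0) (hd₁ : d₁ ≠ 0)
    (hd₂ : d₂ ≠ 0) (hab : a * b < α * β) :
    finrank k (k[ℤ × ℤ] ⧸ (Ideal.span {trinomialX c₀ c₁ c₂ α b, trinomialY d₀ d₁ d₂ β a}).map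
      (algebraMap k[ℕ × ℕ] k[ℤ × ℤ])) + a * b = (α + 1) * (β + 1) := by
  have hαβ : α * β ≠ 0 := by omega
  have hα : 1 ≤ α := Nat.one_le_iff_ne_zero.2 (left_ne_zero_of_mul hαβ)
  have hβ : 1 ≤ β := Nat.one_le_iff_ne_zero.2 (right_ne_zero_of_mul hαβ)
  have hFx : ∀ s ∈ (trinomialX c₀ c₁ c₂ α b).coeff.support, s ≠ (0, b) → (1, 0) ≤ s := by
    intro s hs hsb
    rcases mem_support_trinomial hs with rfl | rfl | rfl
    exacts [by simp [Prod.le_def], by simpa [Prod.le_def] using hα, absurd rfl hsb]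
  have hGy : ∀ s ∈ (trinomialY d₀ d₁ d₂ β a).coeff.support, s ≠ (a, 0) → (0, 1) ≤ s := by
    intro s hs hsa
    rcases mem_support_trinomial hs with rfl | rfl | rfl
    exacts [by simp [Prod.le_def], by simpa [Prod.le_def] using hβ, absurd rfl hsa]
  have hw : linearWeight (b + β) (a + α) (1, 1) ≠ 0 := by
    rw [linearWeight_apply]
    omega
  refine finrank_quotient_map_add_mul (w := linearWeight (b + β) (a + α)) hw
    (isTopExponent_trinomial hc₁ ?_ ?_) (isTopExponent_trinomial hd₁ ?_ ?_)
    (isBottomExponent_trinomial hc₂ ?_ ?_) (isBottomExponent_trinomial hd₂ ?_ ?_) hFx hGy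
  all_goals
    simp only [linearWeight_apply]
    nlinarith

theorem map_span_trinomials :
    (Ideal.span {trinomialX c₀ c₁ c₂ α b, trinomialY d₀ d₁ d₂ β a}).map
      (algebraMap k[ℕ × ℕ] k[ℤ × ℤ]) =
    Ideal.span {single 0 c₀ + single (1, 0) c₁ + single (-(α : ℤ), (b : ℤ)) c₂,
      single 0 d₀ + single (0, 1) d₁ + single ((a : ℤ), -(β : ℤ)) d₂} := by
  have hX : algebraMap k[ℕ × ℕ] k[ℤ × ℤ] (trinomialX c₀ c₁ c₂ α b) = single ((α : ℤ), 0) 1 *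
      (single 0 c₀ + single (1, 0) c₁ + single (-(α : ℤ), (b : ℤ)) c₂) := by
    simp only [trinomialX, map_add, algebraMap_single, mul_add, single_mul_single, one_mul,
      Prod.mk_add_mk, Nat.cast_add, Nat.cast_one, Nat.cast_zero, add_zero, zero_add, add_neg_cancel]
    abel
  have hY : algebraMap k[ℕ × ℕ] k[ℤ × ℤ] (trinomialY d₀ d₁ d₂ β a) = single (0, (β : ℤ)) 1 *
      (single 0 d₀ + single (0, 1) d₁ + single ((a : ℤ), -(β : ℤ)) d₂) := by
    simp only [trinomialY, map_add, algebraMap_single, mul_add, single_mul_single, one_mul,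
      Prod.mk_add_mk, Nat.cast_add, Nat.cast_one, Nat.cast_zero, add_zero, zero_add, add_neg_cancel]
    abel
  rw [Ideal.map_span, Set.image_pair, hX, hY, Ideal.span_insert, Ideal.span_insert,
    Ideal.span_singleton_mul_left_unit (isUnit_single _ one_ne_zero),
    Ideal.span_singleton_mul_left_unit (isUnit_single _ one_ne_zero)]

theorem bb_index_regime_small_general {k : Type*} [Field k] (c₀ c₁ c₂ d₀ d₁ d₂ : k) (hc₁ : c₁ ≠ 0)
    (hc₂ : c₂ ≠ 0) (hd₁ : d₁ ≠ 0) (hd₂ : d₂ ≠ 0) (α β a b : ℤ) (hα : 1 ≤ α) (ha : 0 ≤ a)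
    (hb : 0 ≤ b) (hab : a * b < α * β) :
    (finrank k (k[ℤ × ℤ] ⧸ Ideal.span {single 0 c₀ + single (1, 0) c₁ + single (-α, b) c₂,
      single 0 d₀ + single (0, 1) d₁ + single (a, -β) d₂}) : ℤ) =
      (α + 1) * (β + 1) - a * b := by
  have hβ : 0 ≤ β := by nlinarith [mul_nonneg ha hb]
  lift α to ℕ using by omega
  lift β to ℕ using hβ
  lift a to ℕ using ha
  lift b to ℕ using hb
  have hdim := finrank_quotient_map_trinomials (c₀ := c₀) (d₀ := d₀) hc₁ hc₂ hd₁ hd₂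
    (by exact_mod_cast hab)
  rw [map_span_trinomials] at hdim
  rw [eq_sub_iff_add_eq]
  exact_mod_cast hdim

end Trinomials

end

/-- If `α, β ≥ 1`, `a, b ≥ 0` and `a·b < α·β`, the topological index of BB(ᾱ, β̄, a, b) is `Q = (α+1)·(β+1) − a·b`. -/
theorem bb_index_regime_small (α β a b : ℤ) (hα : 1 ≤ α) (hβ : 1 ≤ β) (ha : 0 ≤ a) (hb : 0 ≤ b) (hab : a * b < α * β) :
    (Module.finrank (ZMod 2)
      (LaurentR ⧸ Ideal.span ({fBB α b, gBB β a} : Set LaurentR)) : ℤ) = (α + 1) * (β + 1) - a * b :=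
  bb_index_regime_small_general 1 1 1 1 1 1 one_ne_zero one_ne_zero one_ne_zero one_ne_zero
    α β a b hα ha hb hab
end
end

section
/- Let α, β, a, b be integers with α ≥ β ≥ 1, a ≤ 0, b ≤ 0 and a·b > α·(β + 1). Then the topological index of the BB(ᾱ, β̄, a, b) code, with f = 1 + x + x^{-α} y^{b} and g = 1 + y + y^{-β} x^{a} in R, is Q = dim_{F₂} R ⧸ (f, g) = a·b − α·β + 1. -/
noncomputable section

/-!
Write `a = -A` and `b = -B`. Adjoin to the quotient ring a `B`-th root `t` of `x`, which multiplies
its dimension by `B`, and put `w = t ^ (-α) * y⁻¹`. Then `f` becomes the Fermat polynomial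
`w ^ B + t ^ B + 1` and, up to a unit, `g` becomes `t ^ (m + α) * w + w ^ (β + 1) + t ^ m`, where
`m = A * B - α * (β + 1)`. As `m` is positive, `t` and `w` are automatically invertible at the
common zeros. As `β < m + α`, these plane curves have degrees `B` and `m + α + 1`; they do not meet
at infinity, since their leading forms `w ^ B + t ^ B` and `t ^ (m + α) * w` have no common zero.
By Bézout the intersection has dimension `B * (m + α + 1)`, so the index is
`m + α + 1 = a * b - α * β + 1`.

Bézout is elementary here: modulo terms of lower degree, multiplication by the second polynomial
permutes and shifts the basis `t ^ i * w ^ j`, `j < B`, of the Fermat ring up to sign, and the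
dimension of its cokernel is the number of basis elements that are missed.
-/

open Module Polynomial

section Triangular

variable {K V : Type*} [Ring K] [AddCommGroup V] [Module K V] {ι κ : Type*}

theorem exists_mem_span_image_lt (b : Basis κ K V) (deg : κ → ℕ) (v : V) :
    ∃ d, v ∈ Submodule.span K (b '' {k | deg k < d}) :=
  ⟨(b.repr v).support.sup deg + 1, b.mem_span_image.2 fun _ hk ↦
    Nat.lt_succ_iff.2 (Finset.le_sup (Finset.mem_coe.1 hk))⟩

theorem bijective_of_basis_sub_mem_span_lt (b : Basis κ K V) (deg : κ → ℕ) (T : V →ₗ[K] V)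
    (hT : ∀ k, b k - T (b k) ∈ Submodule.span K (b '' {l | deg l < deg k})) :
    Function.Bijective T := by
  let F (d : ℕ) : Submodule K V := Submodule.span K (b '' {l | deg l < d})
  have F_mono : Monotone F := fun d e hde ↦
    Submodule.span_mono (Set.image_mono fun l (hl : deg l < d) ↦ hl.trans_le hde)
  have F_zero : F 0 = ⊥ := by simp [F]
  have sub_mem : ∀ d, ∀ v ∈ F (d + 1), v - T v ∈ F d := by
    intro d
    suffices F (d + 1) ≤ (F d).comap (LinearMap.id - T) from this
    refine Submodule.span_le.2 ?_
    rintro _ ⟨k, hk, rfl⟩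
    exact F_mono (Nat.lt_succ_iff.1 hk) (hT k)
  have exhaust : ∀ v, ∃ d, v ∈ F d := exists_mem_span_image_lt b deg
  constructor
  · rw [injective_iff_map_eq_zero]
    intro v hv
    obtain ⟨d, hd⟩ := exhaust v
    induction d with
    | zero => simpa [F_zero] using hd
    | succ d ih => exact ih (by simpa [hv] using sub_mem d v hd)
  · intro v
    obtain ⟨d, hd⟩ := exhaust v
    induction d generalizing v with
    | zero => exact ⟨0, by simpa [F_zero, eq_comm] using hd⟩
    | succ d ih =>
      obtain ⟨u, hu⟩ := ih _ (sub_mem d v hd)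
      exact ⟨v + u, by simp [hu]⟩

theorem finrank_quotient_span_image_basis [StrongRankCondition K] (b : Basis κ K V) (s : Set κ) :
    finrank K (V ⧸ Submodule.span K (b '' s)) = Nat.card ↥sᶜ := by
  have := nontrivial_of_invariantBasisNumber K
  have h : IsCompl (Submodule.span K (b '' s)) (Submodule.span K (b '' sᶜ)) := by
    refine ⟨b.linearIndependent.disjoint_span_image disjoint_compl_right, ?_⟩
    rw [codisjoint_iff, ← Submodule.span_union, ← Set.image_union, Set.union_compl_self,
      Set.image_univ, b.span_eq]
  rw [(Submodule.quotientEquivOfIsCompl _ _ h).finrank_eq, Set.image_eq_range]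
  exact finrank_eq_nat_card_basis
    (Basis.span (b.linearIndependent.comp _ Subtype.val_injective))

theorem finrank_quotient_range_of_triangular [StrongRankCondition K] {U : Type*} [AddCommGroup U]
    [Module K U] (c : Basis ι K U) (b : Basis κ K V) (deg : κ → ℕ) {σ : ι → κ}
    (hσ : Function.Injective σ) (M : U →ₗ[K] V)
    (hM : ∀ i, b (σ i) - M (c i) ∈ Submodule.span K (b '' {l | deg l < deg (σ i)})) :
    finrank K (V ⧸ LinearMap.range M) = Nat.card ↥(Set.range σ)ᶜ := by
  classical
  -- `T` is unitriangular, so its values on `b` form a basis again, and `M` maps `c` into it.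
  let T : V →ₗ[K] V := b.constr ℕ (Function.extend σ (M ∘ c) b)
  have T_range : ∀ i, T (b (σ i)) = M (c i) := fun i ↦ by
    rw [b.constr_basis, hσ.extend_apply, Function.comp_apply]
  have hT : Function.Bijective T := by
    refine bijective_of_basis_sub_mem_span_lt b deg T fun k ↦ ?_
    by_cases hk : ∃ i, σ i = k
    · obtain ⟨i, rfl⟩ := hk
      rw [T_range]
      exact hM i
    · rw [b.constr_basis, Function.extend_apply' _ _ _ hk, sub_self]
      exact zero_mem _
  let e : Basis κ K V := b.map (LinearEquiv.ofBijective T hT)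
  have range_eq : LinearMap.range M = Submodule.span K (e '' Set.range σ) := by
    have : e ∘ σ = M ∘ c := funext T_range
    rw [← Set.range_comp, this, Set.range_comp, ← Submodule.map_span, c.span_eq,
      Submodule.map_top]
  rw [range_eq, finrank_quotient_span_image_basis]

end Triangular

section Shift

variable {J : Type*} (π : Equiv.Perm J) (d : J → ℕ)

/-- The self-map of `ℕ × J` that permutes the rows `ℕ × {j}` by `π`, the map onto row `j` being a
shift by `d j`. It records leading terms of multiplication operators. -/
def rowShift (p : ℕ × J) : ℕ × J := (p.1 + d (π p.2), π p.2)

theorem rowShift_injective : Function.Injective (rowShift π d) := by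
  rintro ⟨i, j⟩ ⟨k, l⟩ h
  obtain ⟨h₁, h₂⟩ := Prod.mk.inj h
  obtain rfl : j = l := π.injective h₂
  obtain rfl : i = k := Nat.add_right_cancel h₁
  rfl

theorem range_rowShift : Set.range (rowShift π d) = {p | d p.2 ≤ p.1} := by
  ext ⟨i, j⟩
  constructor
  · rintro ⟨p, hp⟩
    rw [← hp]
    exact Nat.le_add_left _ _
  · intro h
    refine ⟨(i - d j, π.symm j), ?_⟩
    simpa [rowShift] using Nat.sub_add_cancel h

theorem natCard_compl_range_rowShift [Fintype J] :
    Nat.card ↥(Set.range (rowShift π d))ᶜ = ∑ j, d j := by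
  let e : ↥(Set.range (rowShift π d))ᶜ ≃ Σ j, Fin (d j) :=
    { toFun p := ⟨p.1.2, p.1.1, by simpa [range_rowShift] using p.2⟩
      invFun q := ⟨(q.2, q.1), by simp [range_rowShift]⟩ }
  simp [Nat.card_congr e]

end Shift

theorem finrank_adjoinRoot_X_pow_sub_C {K Q : Type*} [Field K] [CommRing Q] [Algebra K Q] {n : ℕ}
    (hn : n ≠ 0) (x : Q) : finrank K (AdjoinRoot (X ^ n - C x)) = n * finrank K Q := by
  cases subsingleton_or_nontrivial Q
  · have := Module.subsingleton Q (AdjoinRoot (X ^ n - C x))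
    rw [finrank_zero_of_subsingleton, finrank_zero_of_subsingleton, mul_zero]
  · have monic : (X ^ n - C x).Monic := monic_X_pow_sub_C x hn
    have := monic.free_adjoinRoot
    rw [← finrank_mul_finrank K Q (AdjoinRoot (X ^ n - C x)), mul_comm,
      (AdjoinRoot.powerBasis' monic).finrank, AdjoinRoot.powerBasis'_dim, natDegree_X_pow_sub_C]

section FinAddOne

variable {n : ℕ} [NeZero n] {j : Fin n}

theorem val_add_one_of_eq_zero (hj : j + 1 = 0) : (j : ℕ) + 1 = n := by
  have : ((j : ℕ) + 1) % n = 0 := by simpa [Fin.val_add] using congrArg Fin.val hj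
  exact Nat.le_antisymm j.isLt (Nat.le_of_dvd (Nat.succ_pos _) (Nat.dvd_of_mod_eq_zero this))

theorem val_add_one_of_ne_zero (hj : j + 1 ≠ 0) : ((j + 1 : Fin n) : ℕ) = j + 1 := by
  refine Fin.val_add_one_of_lt' (lt_of_le_of_ne j.isLt fun h ↦ hj (Fin.ext ?_))
  simp [Fin.val_add, h]

end FinAddOne

section FermatRing

variable (K : Type*) [CommRing K] (B : ℕ)

/-- The equation `w ^ B + t ^ B + 1` of the affine Fermat curve, as a polynomial in `w` with
coefficients in `K[t]`. -/
def fermatPoly : K[X][X] := X ^ B + C (X ^ B + 1)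

variable {K} in
theorem eval₂_fermatPoly {A : Type*} [CommRing A] (φ : K[X] →+* A) (v : A) :
    (fermatPoly K B).eval₂ φ v = v ^ B + φ X ^ B + 1 := by
  rw [fermatPoly, eval₂_add, eval₂_X_pow, eval₂_C, map_add, map_pow, map_one, add_assoc]

/-- The coordinate ring `K[t, w] / (w ^ B + t ^ B + 1)` of the affine Fermat curve. -/
abbrev FermatRing : Type _ := AdjoinRoot (fermatPoly K B)

namespace FermatRing

/-- The coordinate function `t` on the Fermat curve. -/
def t : FermatRing K B := AdjoinRoot.of (fermatPoly K B) X

/-- The coordinate function `w` on the Fermat curve. -/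
def w : FermatRing K B := AdjoinRoot.root (fermatPoly K B)

theorem w_pow_add_t_pow_add_one : w K B ^ B + t K B ^ B + 1 = 0 := by
  rw [w, t, ← eval₂_fermatPoly, AdjoinRoot.eval₂_root]

/-- The `K`-basis `t ^ i * w ^ j`, with `j < B`, of the Fermat ring. -/
def monomialBasis [Nontrivial K] [NeZero B] : Basis (ℕ × Fin B) K (FermatRing K B) :=
  ((basisMonomials K).smulTower
    (AdjoinRoot.powerBasis' (g := fermatPoly K B)
      (monic_X_pow_add_C _ (NeZero.ne B))).basis).reindex
        ((Equiv.refl ℕ).prodCongr (finCongr natDegree_X_pow_add_C))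

theorem monomialBasis_apply [Nontrivial K] [NeZero B] (p : ℕ × Fin B) :
    monomialBasis K B p = t K B ^ p.1 * w K B ^ (p.2 : ℕ) := by
  simp only [monomialBasis, Basis.reindex_apply, Basis.smulTower_apply, PowerBasis.coe_basis]
  simp only [AdjoinRoot.powerBasis', Equiv.prodCongr_symm, Equiv.refl_symm, coe_basisMonomials,
    ← X_pow_eq_monomial, Algebra.smul_def, AdjoinRoot.algebraMap_eq, map_pow]
  rfl

section Lift

variable {K B} {A : Type*} [CommRing A] [Algebra K A]

/-- The homomorphism out of the Fermat ring given by an `A`-point of the Fermat curve. -/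
def lift (t₀ w₀ : A) (h : w₀ ^ B + t₀ ^ B + 1 = 0) : FermatRing K B →ₐ[K] A :=
  AdjoinRoot.liftAlgHom _ (aeval t₀) w₀ (by simpa [eval₂_fermatPoly] using h)

@[simp]
theorem lift_t (t₀ w₀ : A) (h) : lift (K := K) (B := B) t₀ w₀ h (t K B) = t₀ := by simp [lift, t]

@[simp]
theorem lift_w (t₀ w₀ : A) (h) : lift (K := K) (B := B) t₀ w₀ h (w K B) = w₀ := by simp [lift, w]

theorem algHom_ext {φ ψ : FermatRing K B →ₐ[K] A} (ht : φ (t K B) = ψ (t K B))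
    (hw : φ (w K B) = ψ (w K B)) : φ = ψ :=
  AdjoinRoot.algHom_ext' (Polynomial.algHom_ext ht) hw

end Lift

/-- The functions on the Fermat curve of degree at most `d` as polynomials in `t` and `w`. -/
def degreeLE (d : ℕ) : Submodule K (FermatRing K B) :=
  Submodule.span K ((fun p : ℕ × ℕ ↦ t K B ^ p.1 * w K B ^ p.2) '' {p | p.1 + p.2 ≤ d})

variable {K B}

theorem pow_mul_pow_mem_degreeLE {i k d : ℕ} (h : i + k ≤ d) :
    t K B ^ i * w K B ^ k ∈ degreeLE K B d :=
  Submodule.subset_span ⟨(i, k), h, rfl⟩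

theorem mul_mem_degreeLE {u v : FermatRing K B} {d e : ℕ} (hu : u ∈ degreeLE K B d)
    (hv : v ∈ degreeLE K B e) : u * v ∈ degreeLE K B (d + e) := by
  suffices degreeLE K B d * degreeLE K B e ≤ degreeLE K B (d + e) from
    this (Submodule.mul_mem_mul hu hv)
  rw [degreeLE, degreeLE, Submodule.span_mul_span, Submodule.span_le]
  rintro _ ⟨_, ⟨p, hp, rfl⟩, _, ⟨q, hq, rfl⟩, rfl⟩
  have : t K B ^ (p.1 + q.1) * w K B ^ (p.2 + q.2) ∈ degreeLE K B (d + e) :=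
    pow_mul_pow_mem_degreeLE (by grind)
  rwa [pow_add, pow_add, mul_mul_mul_comm] at this

variable [NeZero B]

theorem degreeLE_le_span_monomialBasis [Nontrivial K] (d : ℕ) :
    degreeLE K B d ≤ Submodule.span K (monomialBasis K B '' {p | p.1 + p.2 < d + 1}) := by
  refine Submodule.span_le.2 ?_
  rintro _ ⟨⟨i, k⟩, hik, rfl⟩
  replace hik : i + k ≤ d := hik
  change t K B ^ i * w K B ^ k ∈ _
  induction k using Nat.strong_induction_on generalizing i with
  | _ k ih =>
    obtain hk | hk := lt_or_ge k B
    · exact Submodule.subset_span ⟨(i, ⟨k, hk⟩), Nat.lt_succ_of_le hik, monomialBasis_apply K B _⟩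
    · obtain ⟨l, rfl⟩ := Nat.exists_eq_add_of_le hk
      have reduce : t K B ^ i * w K B ^ (B + l) =
          -(t K B ^ (i + B) * w K B ^ l + t K B ^ i * w K B ^ l) := by
        linear_combination t K B ^ i * w K B ^ l * w_pow_add_t_pow_add_one K B
      have hB := NeZero.pos B
      rw [reduce]
      exact neg_mem (add_mem (ih l (by omega) _ (by omega)) (ih l (by omega) _ (by omega)))

/-- The index of the leading term of `t ^ c * w * monomialBasis K B p`. -/
def leadingIndex (c : ℕ) : ℕ × Fin B → ℕ × Fin B :=
  rowShift (Equiv.addRight 1) fun j ↦ if j = 0 then c + B else c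

variable (K) in
/-- The coefficient of the leading term of `t ^ c * w * monomialBasis K B p`; the sign comes from
the reduction `w ^ B = -(t ^ B + 1)`. -/
def leadingCoeff (p : ℕ × Fin B) : Kˣ := if p.2 + 1 = 0 then -1 else 1

theorem leadingIndex_fst_add_snd (c : ℕ) (p : ℕ × Fin B) :
    (leadingIndex c p).1 + ((leadingIndex c p).2 : ℕ) = c + (p.1 + p.2) + 1 := by
  by_cases h : p.2 + 1 = 0
  · have := val_add_one_of_eq_zero h
    simp only [leadingIndex, rowShift, Equiv.coe_addRight, h, if_true, Fin.val_zero]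
    omega
  · have := val_add_one_of_ne_zero h
    simp only [leadingIndex, rowShift, Equiv.coe_addRight, h, if_false, this]
    omega

theorem natCard_compl_range_leadingIndex (c : ℕ) :
    Nat.card ↥(Set.range (leadingIndex (B := B) c))ᶜ = B * (c + 1) := by
  have split (j : Fin B) : (if j = 0 then c + B else c) = c + if j = 0 then B else 0 := by
    split_ifs <;> rfl
  rw [leadingIndex, natCard_compl_range_rowShift]
  simp [split, Finset.sum_add_distrib, mul_add]

theorem monomialBasis_leadingIndex_sub_mem_degreeLE [Nontrivial K] {c : ℕ} {r : FermatRing K B}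
    (hr : r ∈ degreeLE K B c) (p : ℕ × Fin B) :
    monomialBasis K B (leadingIndex c p) -
      (t K B ^ c * w K B + r) * leadingCoeff K p • monomialBasis K B p ∈
        degreeLE K B (c + (p.1 + p.2)) := by
  obtain ⟨i, j⟩ := p
  have lower : r * (t K B ^ i * w K B ^ (j : ℕ)) ∈ degreeLE K B (c + (i + j)) :=
    mul_mem_degreeLE hr (pow_mul_pow_mem_degreeLE le_rfl)
  rw [monomialBasis_apply, monomialBasis_apply]
  by_cases h : j + 1 = 0
  · have w_pow : w K B ^ (j : ℕ) * w K B = -(t K B ^ B + 1) := by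
      rw [← pow_succ, val_add_one_of_eq_zero h]
      linear_combination w_pow_add_t_pow_add_one K B
    have tail : t K B ^ (c + i) * w K B ^ 0 ∈ degreeLE K B (c + (i + j)) :=
      pow_mul_pow_mem_degreeLE (by omega)
    convert sub_mem lower tail using 1
    simp only [leadingIndex, rowShift, leadingCoeff, Equiv.coe_addRight, h, if_true, Fin.val_zero,
      pow_zero, mul_one, Units.neg_smul, one_smul, mul_neg, sub_neg_eq_add]
    linear_combination t K B ^ (c + i) * w_pow
  · convert neg_mem lower using 1
    simp only [leadingIndex, rowShift, leadingCoeff, Equiv.coe_addRight, h, if_false,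
      val_add_one_of_ne_zero h, one_smul]
    ring

theorem finrank_quotient_span [Nontrivial K] {c : ℕ} {r : FermatRing K B}
    (hr : r ∈ degreeLE K B c) :
    finrank K (FermatRing K B ⧸ Ideal.span {t K B ^ c * w K B + r}) = B * (c + 1) := by
  set h := t K B ^ c * w K B + r
  have leading (p : ℕ × Fin B) :
      monomialBasis K B (leadingIndex c p) -
        LinearMap.mul K _ h ((monomialBasis K B).unitsSMul (leadingCoeff K) p) ∈
          Submodule.span K (monomialBasis K B ''
            {q | q.1 + q.2 < (leadingIndex c p).1 + (leadingIndex c p).2}) := by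
    rw [leadingIndex_fst_add_snd, Basis.unitsSMul_apply, LinearMap.mul_apply']
    exact degreeLE_le_span_monomialBasis _ (monomialBasis_leadingIndex_sub_mem_degreeLE hr p)
  have := finrank_quotient_range_of_triangular ((monomialBasis K B).unitsSMul (leadingCoeff K))
    (monomialBasis K B) (fun p ↦ p.1 + p.2) (rowShift_injective _ _) _ leading
  rw [← natCard_compl_range_leadingIndex, leadingIndex, ← this, Ideal.range_mul]
  exact (Submodule.Quotient.restrictScalarsEquiv K (Ideal.span {h})).finrank_eq.symm

end FermatRing

end FermatRing

section BivariateBicycle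

/-- The common zeros, in the torus over a ring `A`, of the bivariate-bicycle polynomials
`1 + x + x ^ (-α) * y ^ b` and `1 + y + x ^ a * y ^ (-β)`. -/
structure IsBBZero {A : Type*} [CommRing A] (α β a b : ℤ) (x y : Aˣ) : Prop where
  f_eq_zero : 1 + (x : A) + ((x ^ (-α) * y ^ b : Aˣ) : A) = 0
  g_eq_zero : 1 + (y : A) + ((x ^ a * y ^ (-β) : Aˣ) : A) = 0

theorem IsBBZero.map {A A' : Type*} [CommRing A] [CommRing A'] (φ : A →+* A') {α β a b : ℤ}
    {u v : Aˣ} (h : IsBBZero α β a b u v) :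
    IsBBZero α β a b (Units.map (φ : A →* A') u) (Units.map (φ : A →* A') v) where
  f_eq_zero := by
    have map_f : φ (1 + u + (u ^ (-α) * v ^ b : Aˣ)) = 0 := by rw [h.f_eq_zero, map_zero]
    rw [map_add, map_add, map_one] at map_f
    rwa [← map_zpow, ← map_zpow, ← map_mul]
  g_eq_zero := by
    have map_g : φ (1 + v + (u ^ a * v ^ (-β) : Aˣ)) = 0 := by rw [h.g_eq_zero, map_zero]
    rw [map_add, map_add, map_one] at map_g
    rwa [← map_zpow, ← map_zpow, ← map_mul]

/-- The points of the Fermat curve at which `t ^ (m + α) * w + (w ^ (β + 1) + t ^ m)` vanishes. -/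
structure IsFermatZero {A : Type*} [CommRing A] (B α β m : ℕ) (t w : A) : Prop where
  curve : w ^ B + t ^ B + 1 = 0
  divisor : t ^ (m + α) * w + (w ^ (β + 1) + t ^ m) = 0

namespace IsFermatZero

variable {A : Type*} [CommRing A] {B α β m : ℕ} [NeZero B] [NeZero m] {t w : A}

theorem isUnit_t (h : IsFermatZero B α β m t w) : IsUnit t := by
  have coprime_pow : IsCoprime t (w ^ B) := by
    refine ⟨-t ^ (B - 1), -1, ?_⟩
    rw [neg_mul, pow_sub_one_mul (NeZero.ne B)]
    linear_combination -h.curve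
  have coprime : IsCoprime t (w ^ (β + 1)) :=
    ((IsCoprime.pow_right_iff (NeZero.pos B)).1 coprime_pow).pow_right
  refine coprime.isUnit_of_dvd' dvd_rfl ?_
  have : w ^ (β + 1) = t ^ m * -(t ^ α * w + 1) := by linear_combination h.divisor
  rw [this]
  exact (dvd_pow_self t (NeZero.ne m)).mul_right _

theorem isUnit_w (h : IsFermatZero B α β m t w) : IsUnit w := by
  refine isUnit_of_dvd_unit ⟨-(t ^ (m + α) + w ^ β), ?_⟩ (h.isUnit_t.pow m)
  linear_combination h.divisor

end IsFermatZero

theorem isBBZero_iff_isFermatZero {A : Type*} [CommRing A] {α β a B m : ℕ}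
    (hm : a * B = m + α * (β + 1)) (t w : Aˣ) :
    IsBBZero α β (-a) (-B) (t ^ B) (t ^ (-α : ℤ) * w⁻¹) ↔
      IsFermatZero B α β m (t : A) (w : A) := by
  have f_monomial : (t ^ B) ^ (-α : ℤ) * (t ^ (-α : ℤ) * w⁻¹) ^ (-B : ℤ) = w ^ B := by
    have exponent_t : (B * -α + -α * -B : ℤ) = 0 := by ring
    rw [mul_zpow, inv_zpow', neg_neg, ← zpow_natCast t, ← zpow_mul, ← zpow_mul, ← mul_assoc,
      ← zpow_add, exponent_t, zpow_zero, one_mul, zpow_natCast]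
  have clear_one : t ^ (m + α) * w * (t ^ (-α : ℤ) * w⁻¹) = t ^ m := by
    rw [mul_mul_mul_comm, mul_inv_cancel, mul_one, pow_add, zpow_neg, zpow_natCast,
      mul_inv_cancel_right]
  have clear_g : t ^ (m + α) * w * ((t ^ B) ^ (-a : ℤ) * (t ^ (-α : ℤ) * w⁻¹) ^ (-β : ℤ)) =
      w ^ (β + 1) := by
    have exponent_t : ((m + α : ℕ) + (B * -a + -α * -β) : ℤ) = 0 := by
      push_cast
      zify at hm
      linear_combination -hm
    rw [mul_zpow, inv_zpow', neg_neg, ← zpow_natCast t, ← zpow_natCast t, ← zpow_mul, ← zpow_mul,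
      ← mul_assoc (t ^ (_ * _)), ← zpow_add, mul_mul_mul_comm, ← zpow_add, exponent_t, zpow_zero,
      one_mul, zpow_natCast, pow_succ']
  have f_iff : 1 + ((t ^ B : Aˣ) : A) + (w ^ B : Aˣ) = 0 ↔ (w : A) ^ B + t ^ B + 1 = 0 := by
    push_cast
    rw [add_comm, add_comm 1, add_assoc]
  have g_iff : 1 + ((t ^ (-α : ℤ) * w⁻¹ : Aˣ) : A) +
      ((t ^ B) ^ (-a : ℤ) * (t ^ (-α : ℤ) * w⁻¹) ^ (-β : ℤ) : Aˣ) = 0 ↔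
      (t : A) ^ (m + α) * w + (w ^ (β + 1) + t ^ m) = 0 := by
    rw [← (t ^ (m + α) * w).isUnit.mul_right_eq_zero, mul_add, mul_add, ← Units.val_mul,
      ← Units.val_mul, clear_one, clear_g]
    push_cast
    rw [mul_one, add_assoc, add_comm ((t : A) ^ m)]
  constructor
  · rintro ⟨hf, hg⟩
    exact ⟨f_iff.1 (f_monomial ▸ hf), g_iff.1 hg⟩
  · rintro ⟨hf, hg⟩
    exact ⟨f_monomial ▸ f_iff.2 hf, g_iff.2 hg⟩

section Torus

variable (K : Type*) [CommRing K]

/-- The monomials of the ring `K[x^±, y^±]` of Laurent polynomials, as units. -/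
def monomialUnit : Multiplicative (ℤ × ℤ) →* (AddMonoidAlgebra K (ℤ × ℤ))ˣ :=
  (Units.map (AddMonoidAlgebra.of K (ℤ × ℤ))).comp toUnits.toMonoidHom

theorem single_eq_zpow_mul_zpow (i j : ℤ) :
    AddMonoidAlgebra.single (i, j) (1 : K) =
      ((monomialUnit K (.ofAdd (1, 0)) ^ i * monomialUnit K (.ofAdd (0, 1)) ^ j : Units _) :
        AddMonoidAlgebra K (ℤ × ℤ)) := by
  rw [← map_zpow (monomialUnit K), ← map_zpow (monomialUnit K), ← map_mul, ← ofAdd_zsmul,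
    ← ofAdd_zsmul, ← ofAdd_add]
  simp [monomialUnit]

variable {K} {A : Type*} [CommRing A] [Algebra K A]

/-- Evaluation of Laurent polynomials at a point of the torus. -/
def torusEval (u v : Aˣ) : AddMonoidAlgebra K (ℤ × ℤ) →ₐ[K] A :=
  AddMonoidAlgebra.lift K A (ℤ × ℤ)
    { toFun p := ((u ^ p.toAdd.1 * v ^ p.toAdd.2 : Aˣ) : A)
      map_one' := by simp
      map_mul' p q := by
        rw [← Units.val_mul, toAdd_mul, Prod.fst_add, Prod.snd_add, zpow_add, zpow_add,
          mul_mul_mul_comm] }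

theorem torusEval_single (u v : Aˣ) (i j : ℤ) :
    torusEval u v (AddMonoidAlgebra.single (i, j) (1 : K)) = ((u ^ i * v ^ j : Aˣ) : A) := by
  simp [torusEval]

end Torus

/-- The ideal generated by the bivariate-bicycle polynomials `1 + x + x ^ (-α) * y ^ b` and
`1 + y + x ^ a * y ^ (-β)` in `K[x^±, y^±]`. -/
def bbIdeal (K : Type*) [CommRing K] (α β a b : ℤ) : Ideal (AddMonoidAlgebra K (ℤ × ℤ)) :=
  Ideal.span {1 + AddMonoidAlgebra.single (1, 0) 1 + AddMonoidAlgebra.single (-α, b) 1,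
    1 + AddMonoidAlgebra.single (0, 1) 1 + AddMonoidAlgebra.single (a, -β) 1}

/-- The coordinate ring of the scheme of common zeros of the bivariate-bicycle polynomials. -/
abbrev BBRing (K : Type*) [CommRing K] (α β a b : ℤ) : Type _ :=
  AddMonoidAlgebra K (ℤ × ℤ) ⧸ bbIdeal K α β a b

namespace BBRing

variable (K : Type*) [CommRing K] (α β a b : ℤ)

/-- The first coordinate of the universal common zero. -/
def x : (BBRing K α β a b)ˣ :=
  Units.map (Ideal.Quotient.mk (bbIdeal K α β a b)) (monomialUnit K (.ofAdd (1, 0)))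

/-- The second coordinate of the universal common zero. -/
def y : (BBRing K α β a b)ˣ :=
  Units.map (Ideal.Quotient.mk (bbIdeal K α β a b)) (monomialUnit K (.ofAdd (0, 1)))

theorem mk_single (i j : ℤ) :
    Ideal.Quotient.mk (bbIdeal K α β a b) (.single (i, j) 1) =
      ((x K α β a b ^ i * y K α β a b ^ j : Units _) : BBRing K α β a b) := by
  have map_units : Units.map (Ideal.Quotient.mk (bbIdeal K α β a b))
      (monomialUnit K (.ofAdd (1, 0)) ^ i * monomialUnit K (.ofAdd (0, 1)) ^ j) =
        x K α β a b ^ i * y K α β a b ^ j := by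
    simp only [map_mul, map_zpow, x, y]
  rw [single_eq_zpow_mul_zpow]
  exact congrArg Units.val map_units

theorem isBBZero : IsBBZero α β a b (x K α β a b) (y K α β a b) where
  f_eq_zero := by
    have : Ideal.Quotient.mk (bbIdeal K α β a b)
        (1 + .single (1, 0) 1 + .single (-α, b) 1) = 0 :=
      Ideal.Quotient.eq_zero_iff_mem.2 (Ideal.subset_span (by simp))
    simpa [mk_single] using this
  g_eq_zero := by
    have : Ideal.Quotient.mk (bbIdeal K α β a b)
        (1 + .single (0, 1) 1 + .single (a, -β) 1) = 0 :=
      Ideal.Quotient.eq_zero_iff_mem.2 (Ideal.subset_span (by simp))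
    simpa [mk_single] using this

variable {K α β a b} {A : Type*} [CommRing A] [Algebra K A]

/-- The homomorphism out of `BBRing` given by a common zero over `A`. -/
def lift {u v : Aˣ} (h : IsBBZero α β a b u v) : BBRing K α β a b →ₐ[K] A :=
  Ideal.Quotient.liftₐ _ (torusEval u v) <| show bbIdeal K α β a b ≤ RingHom.ker _ by
    rw [bbIdeal, Ideal.span_le]
    rintro _ (rfl | rfl)
    · simpa [RingHom.mem_ker, torusEval_single] using h.f_eq_zero
    · simpa [RingHom.mem_ker, torusEval_single] using h.g_eq_zero

theorem lift_x {u v : Aˣ} (h : IsBBZero α β a b u v) : lift h (x K α β a b).val = (u : A) := by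
  change torusEval u v (monomialUnit K (.ofAdd (1, 0))).val = _
  simpa [monomialUnit] using torusEval_single (K := K) u v 1 0

theorem lift_y {u v : Aˣ} (h : IsBBZero α β a b u v) : lift h (y K α β a b).val = (v : A) := by
  change torusEval u v (monomialUnit K (.ofAdd (0, 1))).val = _
  simpa [monomialUnit] using torusEval_single (K := K) u v 0 1

theorem algHom_ext {φ ψ : BBRing K α β a b →ₐ[K] A}
    (hx : φ (x K α β a b) = ψ (x K α β a b)) (hy : φ (y K α β a b) = ψ (y K α β a b)) : φ = ψ := by
  have units_x : Units.map (φ : _ →* A) (x K α β a b) = Units.map (ψ : _ →* A) (x K α β a b) :=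
    Units.ext hx
  have units_y : Units.map (φ : _ →* A) (y K α β a b) = Units.map (ψ : _ →* A) (y K α β a b) :=
    Units.ext hy
  have units_eq (i j : ℤ) : Units.map (φ : _ →* A) (x K α β a b ^ i * y K α β a b ^ j) =
      Units.map (ψ : _ →* A) (x K α β a b ^ i * y K α β a b ^ j) := by
    simp only [map_mul, map_zpow, units_x, units_y]
  refine Ideal.Quotient.algHom_ext _ (AddMonoidAlgebra.algHom_ext (fun p ↦ ?_)
    (Subsingleton.elim _ _))
  change φ (Ideal.Quotient.mk _ (.single (p.1, p.2) 1)) =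
    ψ (Ideal.Quotient.mk _ (.single (p.1, p.2) 1))
  rw [mk_single]
  exact congrArg Units.val (units_eq p.1 p.2)

end BBRing

/-- The ring obtained from `BBRing K α β (-a) (-B)` by adjoining a `B`-th root `t` of `x`. -/
abbrev BBRootRing (K : Type*) [CommRing K] (α β a B : ℕ) : Type _ :=
  AdjoinRoot (X ^ B - C (BBRing.x K α β (-a) (-B)).val)

namespace BBRootRing

variable (K : Type*) [CommRing K] (α β a B : ℕ)

/-- The adjoined `B`-th root of `x`. -/
abbrev root : BBRootRing K α β a B := AdjoinRoot.root (X ^ B - C (BBRing.x K α β (-a) (-B)).val)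

/-- The structure map from the units of `BBRing K α β (-a) (-B)`. -/
abbrev unitsOf : (BBRing K α β (-a) (-B))ˣ →* (BBRootRing K α β a B)ˣ :=
  Units.map (AdjoinRoot.of (X ^ B - C (BBRing.x K α β (-a) (-B)).val) : _ →* _)

theorem root_pow : root K α β a B ^ B = unitsOf K α β a B (BBRing.x K α β (-a) (-B)) := by
  have := AdjoinRoot.eval₂_root (X ^ B - C (BBRing.x K α β (-a) (-B)).val)
  rwa [eval₂_sub, eval₂_X_pow, eval₂_C, sub_eq_zero] at this

section Units

variable [NeZero B]

/-- The adjoined root as a unit, which is the coordinate `t` on the Fermat curve. -/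
def t : (BBRootRing K α β a B)ˣ :=
  .ofPow (unitsOf K α β a B (BBRing.x K α β (-a) (-B))) (root K α β a B) (NeZero.ne B)
    (root_pow K α β a B)

theorem t_pow : t K α β a B ^ B = unitsOf K α β a B (BBRing.x K α β (-a) (-B)) :=
  Units.ext (root_pow K α β a B)

/-- The coordinate `w` on the Fermat curve, determined by `y = t ^ (-α) * w⁻¹`. -/
def w : (BBRootRing K α β a B)ˣ :=
  t K α β a B ^ (-α : ℤ) * (unitsOf K α β a B (BBRing.y K α β (-a) (-B)))⁻¹

theorem t_zpow_mul_w_inv : t K α β a B ^ (-α : ℤ) * (w K α β a B)⁻¹ =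
    unitsOf K α β a B (BBRing.y K α β (-a) (-B)) := by
  rw [w, mul_inv, inv_inv, mul_inv_cancel_left]

theorem isFermatZero {m : ℕ} (hm : a * B = m + α * (β + 1)) :
    IsFermatZero B α β m (t K α β a B).val (w K α β a B).val := by
  rw [← isBBZero_iff_isFermatZero hm, t_pow, t_zpow_mul_w_inv]
  exact (BBRing.isBBZero K α β (-a) (-B)).map _

end Units

variable {K α β a B} {A : Type*} [CommRing A] [Algebra K A]

theorem algHom_ext [NeZero B] {φ ψ : BBRootRing K α β a B →ₐ[K] A}
    (ht : φ (t K α β a B) = ψ (t K α β a B)) (hw : φ (w K α β a B) = ψ (w K α β a B)) : φ = ψ := by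
  let Φ : (BBRootRing K α β a B)ˣ →* Aˣ := Units.map (φ : _ →* A)
  let Ψ : (BBRootRing K α β a B)ˣ →* Aˣ := Units.map (ψ : _ →* A)
  have units_t : Φ (t K α β a B) = Ψ (t K α β a B) := Units.ext ht
  have units_w : Φ (w K α β a B) = Ψ (w K α β a B) := Units.ext hw
  have units_x : Φ (unitsOf K α β a B (BBRing.x K α β (-a) (-B))) =
      Ψ (unitsOf K α β a B (BBRing.x K α β (-a) (-B))) := by
    rw [← t_pow, map_pow, map_pow, units_t]
  have units_y : Φ (unitsOf K α β a B (BBRing.y K α β (-a) (-B))) =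
      Ψ (unitsOf K α β a B (BBRing.y K α β (-a) (-B))) := by
    rw [← t_zpow_mul_w_inv, map_mul, map_mul, map_zpow, map_zpow, map_inv, map_inv, units_t,
      units_w]
  exact AdjoinRoot.algHom_ext'
    (BBRing.algHom_ext (congrArg Units.val units_x) (congrArg Units.val units_y)) ht

variable {m : ℕ} (hm : a * B = m + α * (β + 1)) {u v : Aˣ}
  (h : IsFermatZero B α β m u.val v.val)

/-- The homomorphism out of `BBRootRing` given by units `u` and `v` satisfying the equations of
`t` and `w`. -/
def lift : BBRootRing K α β a B →ₐ[K] A :=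
  AdjoinRoot.liftAlgHom _ (BBRing.lift ((isBBZero_iff_isFermatZero hm u v).2 h)) u (by
    rw [eval₂_sub, eval₂_X_pow, eval₂_C, RingHom.coe_coe, BBRing.lift_x, Units.val_pow_eq_pow_val,
      sub_self])

theorem lift_of (z : BBRing K α β (-a) (-B)) : lift hm h (AdjoinRoot.of _ z) =
    BBRing.lift ((isBBZero_iff_isFermatZero hm u v).2 h) z :=
  AdjoinRoot.liftAlgHom_of ..

variable [NeZero B]

@[simp]
theorem lift_t : lift (K := K) hm h (t K α β a B).val = u.val :=
  AdjoinRoot.liftAlgHom_root ..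

@[simp]
theorem lift_w : lift (K := K) hm h (w K α β a B).val = v.val := by
  let L : (BBRootRing K α β a B)ˣ →* Aˣ := Units.map (lift (K := K) hm h : _ →* A)
  have map_t : L (t K α β a B) = u := Units.ext (lift_t hm h)
  have map_y : L (unitsOf K α β a B (BBRing.y K α β (-a) (-B))) = u ^ (-α : ℤ) * v⁻¹ :=
    Units.ext ((lift_of hm h _).trans (BBRing.lift_y _))
  have map_w : L (w K α β a B) = v := by
    rw [w, map_mul, map_inv, map_zpow, map_t, map_y, mul_inv, inv_inv, mul_inv_cancel_left]
  exact congrArg Units.val map_w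

end BBRootRing

/-- The coordinate ring of the intersection of the Fermat curve with the curve
`t ^ (m + α) * w + (w ^ (β + 1) + t ^ m) = 0`. -/
abbrev FermatIntersection (K : Type*) [CommRing K] (B α β m : ℕ) : Type _ :=
  FermatRing K B ⧸ Ideal.span {FermatRing.t K B ^ (m + α) * FermatRing.w K B +
    (FermatRing.w K B ^ (β + 1) + FermatRing.t K B ^ m)}

namespace FermatIntersection

variable (K : Type*) [CommRing K] (B α β m : ℕ)

/-- The restriction of the coordinate function `t`. -/
def t : FermatIntersection K B α β m := Ideal.Quotient.mk _ (FermatRing.t K B)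

/-- The restriction of the coordinate function `w`. -/
def w : FermatIntersection K B α β m := Ideal.Quotient.mk _ (FermatRing.w K B)

theorem isFermatZero : IsFermatZero B α β m (t K B α β m) (w K B α β m) where
  curve := congrArg (Ideal.Quotient.mk _) (FermatRing.w_pow_add_t_pow_add_one K B)
  divisor := Ideal.Quotient.eq_zero_iff_mem.2 (Ideal.mem_span_singleton_self _)

variable {K B α β m} {A : Type*} [CommRing A] [Algebra K A]

theorem algHom_ext {φ ψ : FermatIntersection K B α β m →ₐ[K] A}
    (ht : φ (t K B α β m) = ψ (t K B α β m)) (hw : φ (w K B α β m) = ψ (w K B α β m)) : φ = ψ :=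
  Ideal.Quotient.algHom_ext _ (FermatRing.algHom_ext ht hw)

variable {u v : A} (h : IsFermatZero B α β m u v)

/-- The homomorphism out of `FermatIntersection` given by a point of the intersection. -/
def lift : FermatIntersection K B α β m →ₐ[K] A :=
  Ideal.Quotient.liftₐ _ (FermatRing.lift u v h.curve) <| show _ ≤ RingHom.ker _ by
    rw [Ideal.span_singleton_le_iff_mem, RingHom.mem_ker]
    simpa using h.divisor

@[simp]
theorem lift_t : lift (K := K) h (t K B α β m) = u :=
  (Ideal.Quotient.lift_mk ..).trans (FermatRing.lift_t u v h.curve)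

@[simp]
theorem lift_w : lift (K := K) h (w K B α β m) = v :=
  (Ideal.Quotient.lift_mk ..).trans (FermatRing.lift_w u v h.curve)

end FermatIntersection

/-- The substitution `x = t ^ B`, `y = t ^ (-α) * w⁻¹`. -/
def bbRootRingEquiv (K : Type*) [CommRing K] {α β a B m : ℕ} [NeZero B] [NeZero m]
    (hm : a * B = m + α * (β + 1)) : BBRootRing K α β a B ≃ₐ[K] FermatIntersection K B α β m :=
  have hF := FermatIntersection.isFermatZero K B α β m
  have hF' : IsFermatZero B α β m hF.isUnit_t.unit.val hF.isUnit_w.unit.val := hF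
  have hR := BBRootRing.isFermatZero K α β a B hm
  .ofAlgHom (BBRootRing.lift hm hF') (FermatIntersection.lift hR)
    (FermatIntersection.algHom_ext (by simp) (by simp))
    (BBRootRing.algHom_ext (by simp) (by simp))

theorem finrank_fermatIntersection (K : Type*) [CommRing K] [Nontrivial K] {B α β m : ℕ} [NeZero B]
    (hβ : β < m + α) : finrank K (FermatIntersection K B α β m) = B * (m + α + 1) := by
  refine FermatRing.finrank_quotient_span (add_mem ?_ ?_)
  · simpa using FermatRing.pow_mul_pow_mem_degreeLE (K := K) (B := B) (i := 0) (k := β + 1)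
      (by omega : 0 + (β + 1) ≤ m + α)
  · simpa using FermatRing.pow_mul_pow_mem_degreeLE (K := K) (B := B) (i := m) (k := 0)
      (by omega : m + 0 ≤ m + α)

theorem finrank_bbRing (K : Type*) [Field K] {α β a B m : ℕ} [NeZero B] [NeZero m]
    (hm : a * B = m + α * (β + 1)) (hβ : β < m + α) :
    finrank K (BBRing K α β (-a) (-B)) = m + α + 1 := by
  refine Nat.eq_of_mul_eq_mul_left (NeZero.pos B) ?_
  rw [← finrank_adjoinRoot_X_pow_sub_C (NeZero.ne B),
    (bbRootRingEquiv K hm).toLinearEquiv.finrank_eq, finrank_fermatIntersection K hβ]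

end BivariateBicycle

theorem bb_index_regime_bottom_left_general (K : Type*) [Field K] (α β a b : ℤ) (hα : 0 ≤ α)
    (hβ : 0 ≤ β) (ha : a ≤ 0) (hb : b ≤ 0) (hfg : α * (β + 1) < a * b) (hgf : (α + 1) * β < a * b) :
    (finrank K (BBRing K α β a b) : ℤ) = a * b - α * β + 1 := by
  lift α to ℕ using hα
  lift β to ℕ using hβ
  obtain ⟨A, rfl⟩ := Int.exists_eq_neg_ofNat ha
  obtain ⟨B, rfl⟩ := Int.exists_eq_neg_ofNat hb
  rw [neg_mul_neg] at hfg hgf ⊢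
  norm_cast at hfg hgf
  obtain ⟨m, hm⟩ := Nat.exists_eq_add_of_lt hfg
  have hAB : A * B = m + 1 + α * (β + 1) := by rw [hm]; ring
  have : NeZero B := ⟨by rintro rfl; simp at hfg⟩
  rw [finrank_bbRing K hAB (by linarith)]
  zify at hAB
  push_cast
  linear_combination -hAB

/-- If `α ≥ β ≥ 1`, `a, b ≤ 0` and `a·b > α·(β+1)`, the topological index of BB(ᾱ, β̄, a, b) is `Q = a·b − α·β + 1`. -/
theorem bb_index_regime_bottom_left (α β a b : ℤ) (hβ : 1 ≤ β) (hαβ : β ≤ α) (ha : a ≤ 0) (hb : b ≤ 0) (hab : α * (β + 1) < a * b) :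
    (Module.finrank (ZMod 2)
      (LaurentR ⧸ Ideal.span ({fBB α b, gBB β a} : Set LaurentR)) : ℤ) = a * b - α * β + 1 := by
  exact bb_index_regime_bottom_left_general (ZMod 2) α β a b (by omega) (by omega) ha hb hab
    (by linear_combination hab + hαβ)
end
end
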